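/- Let P be a measure on ℤ≥0. Then ∑_n E(n) f_P(n) ≤ 1 holds for every e-value E for ℳ if and only if P is a subprobability measure (P(ℤ≥0) ≤ 1) and there exists a probability measure P′ ∈ ℳ with f_P(n) ≤ f_{P′}(n) for all n. Consequently, a probability measure Q on ℤ≥0 satisfies ∑_n E(n) f_Q(n) ≤ 1 for every e-value E for ℳ if and only if Q ∈ ℳ. -/

import Mathlib

open MeasureTheory ENNReal

/-- `ℳ`: monotone probability distributions on `ℤ≥0`. -/
def MonotoneClass : Set (Measure ℕ) :=
  {P | IsProbabilityMeasure P ∧ ∀ n : ℕ, P {n + 1} ≤ P {n}}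

/-- An e-value for `ℳ`. -/
def IsEValueM (E : ℕ → NNReal) : Prop :=
  ∀ P ∈ MonotoneClass, ∑' n : ℕ, (E n : ℝ≥0∞) * P {n} ≤ 1

lemma aux_tsum (P : Measure ℕ) : ∑' n : ℕ, P {n} = P Set.univ := by
  have h := Measure.tsum_indicator_apply_singleton P Set.univ MeasurableSet.univ
  simpa using h

lemma aux_ev (f : ℕ → ℝ≥0∞) (K : ℕ) (a : ℕ → ℕ) :
    ∑' m : ℕ, (((∑ n ∈ Finset.range K, if m = n + a n then (1 : NNReal) else 0 : NNReal)) : ℝ≥0∞) * f m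
      = ∑ n ∈ Finset.range K, f (n + a n) := by
  push_cast
  simp_rw [Finset.sum_mul]
  rw [Summable.tsum_finsetSum (fun _ _ => ENNReal.summable)]
  refine Finset.sum_congr rfl fun n _ => ?_
  rw [tsum_eq_single (n + a n)]
  · simp
  · intro m hm
    simp [hm]

lemma aux_isEV (K : ℕ) (a : ℕ → ℕ) :
    IsEValueM (fun m => ∑ n ∈ Finset.range K, if m = n + a n then (1 : NNReal) else 0) := by
  intro P hP
  obtain ⟨hp, hm⟩ := hP
  rw [aux_ev (fun m => P {m})]
  have hanti : Antitone (fun n : ℕ => P {n}) := antitone_nat_of_succ_le hm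
  calc ∑ n ∈ Finset.range K, P {n + a n} ≤ ∑ n ∈ Finset.range K, P {n} :=
        Finset.sum_le_sum fun n _ => hanti (Nat.le_add_right n (a n))
    _ ≤ ∑' n : ℕ, P {n} := ENNReal.sum_le_tsum _
    _ = 1 := by rw [aux_tsum]; exact hp.measure_univ

lemma aux_sup (f : ℕ → ℝ≥0∞) (h : ∀ (K : ℕ) (a : ℕ → ℕ), ∑ n ∈ Finset.range K, f (n + a n) ≤ 1) :
    ∑' n : ℕ, ⨆ m, f (n + m) ≤ 1 := by
  rw [ENNReal.tsum_eq_iSup_nat]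
  refine iSup_le fun K => ?_
  calc ∑ n ∈ Finset.range K, ⨆ m, f (n + m)
      ≤ ∑ n ∈ Finset.range K, ⨆ a : ℕ → ℕ, f (n + a n) :=
        Finset.sum_le_sum fun n _ => iSup_le fun m => le_iSup (fun a : ℕ → ℕ => f (n + a n)) (fun _ => m)
    _ = ⨆ a : ℕ → ℕ, ∑ n ∈ Finset.range K, f (n + a n) := by
        refine ENNReal.finsetSum_iSup fun a b => ?_
        refine ⟨fun n => if f (n + a n) ≤ f (n + b n) then b n else a n, fun n => ?_⟩
        by_cases hn : f (n + a n) ≤ f (n + b n)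
        · simp [hn]
        · simp [hn, (not_le.mp hn).le]
    _ ≤ 1 := iSup_le fun a => h K a

lemma aux_main (P : Measure ℕ) :
    ((∀ E : ℕ → NNReal, IsEValueM E → ∑' n : ℕ, (E n : ℝ≥0∞) * P {n} ≤ 1) ↔
        (P Set.univ ≤ 1 ∧ ∃ P' ∈ MonotoneClass, ∀ n : ℕ, P {n} ≤ P' {n})) := by
  constructor
  · intro h
    have hg := aux_sup (fun n => P {n}) fun K a => by
      have := h _ (aux_isEV K a)
      rwa [aux_ev (fun m => P {m})] at this
    set g : ℕ → ℝ≥0∞ := fun n => ⨆ m, P {n + m} with hgdef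
    have hfg : ∀ n, P {n} ≤ g n := fun n => le_iSup (fun m => P {n + m}) 0
    have hmono : ∀ n, g (n + 1) ≤ g n := fun n => iSup_le fun m => by
      have := le_iSup (fun m => P {n + m}) (1 + m)
      rwa [← add_assoc] at this
    refine ⟨?_, ?_⟩
    · rw [← aux_tsum]
      exact (ENNReal.tsum_le_tsum hfg).trans hg
    · set c : ℕ → ℝ≥0∞ := fun n => g n + if n = 0 then 1 - ∑' n, g n else 0 with hc
      have hs : ∀ n, (Measure.sum fun k => c k • Measure.dirac k) {n} = c n := by
        intro n
        rw [Measure.sum_apply _ (measurableSet_singleton n), tsum_eq_single n]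
        · simp
        · intro m hm
          simp [hm]
      refine ⟨Measure.sum fun k => c k • Measure.dirac k, ⟨⟨?_⟩, ?_⟩, ?_⟩
      · rw [← aux_tsum]
        simp_rw [hs]
        rw [hc, ENNReal.tsum_add, tsum_ite_eq]
        exact add_tsub_cancel_of_le hg
      · intro n
        rw [hs, hs]
        simp only [hc, Nat.succ_ne_zero, if_false, add_zero]
        exact (hmono n).trans le_self_add
      · intro n
        rw [hs]
        exact (hfg n).trans le_self_add
  · rintro ⟨-, P', hP', hle⟩ E hE
    exact (ENNReal.tsum_le_tsum fun n => mul_le_mul_right (hle n) _).trans (hE P' hP')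


/-- **bipolar of `ℳ`; strong testability of monotonicity.**
A measure `P` on `ℤ≥0` satisfies `∑ₙ E(n) f_P(n) ≤ 1` for every e-value `E` for `ℳ` iff
`P` is a subprobability dominated pointwise by some monotone probability `P′ ∈ ℳ`.
Consequently a probability measure `Q` satisfies this for every e-value iff `Q ∈ ℳ`. -/
theorem stmt3 :
    (∀ P : Measure ℕ,
      ((∀ E : ℕ → NNReal, IsEValueM E → ∑' n : ℕ, (E n : ℝ≥0∞) * P {n} ≤ 1) ↔
        (P Set.univ ≤ 1 ∧ ∃ P' ∈ MonotoneClass, ∀ n : ℕ, P {n} ≤ P' {n}))) ∧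
    (∀ Q : Measure ℕ, IsProbabilityMeasure Q →
      ((∀ E : ℕ → NNReal, IsEValueM E → ∑' n : ℕ, (E n : ℝ≥0∞) * Q {n} ≤ 1) ↔
        Q ∈ MonotoneClass)) := by
  refine ⟨aux_main, fun Q hQ => ⟨fun h => ?_, fun h E hE => hE Q h⟩⟩
  obtain ⟨-, P', hP', hle⟩ := (aux_main Q).1 h
  have hp := hP'.1
  have hQP : Q ≤ P' := by
    refine Measure.le_iff.2 fun s hs => ?_
    rw [← Measure.tsum_indicator_apply_singleton Q s hs,
      ← Measure.tsum_indicator_apply_singleton P' s hs]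
    exact ENNReal.tsum_le_tsum fun n => Set.indicator_le_indicator (hle n)
  have : Q = P' := Measure.eq_of_le_of_measure_univ_eq hQP (by simp)
  rw [this]
  exact hP'
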